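/- Let (T,d) be a metric space with its Borel σ-algebra, T̃ ⊆ T a nonempty set, and Φ(τ) := d(τ,T̃). Let P₁ be a Borel probability measure on T, α > 0, and R : T → ℝ a measurable function such that d(τ₁,T̃) ≤ d(τ₂,T̃) implies R(τ₁) ≥ R(τ₂) for all τ₁, τ₂ ∈ T. Assume τ ↦ exp(R(τ)/α) is P₁-integrable with Z := ∫ exp(R(τ)/α) dP₁(τ) > 0, and let P₂ be the Gibbs update of P₁ with density (1/Z)·exp(R/α). Let δ₀ denote the Dirac measure at 0 on [0,∞) and fix p ≥ 1 with Φ^p and Φ^p·exp(R/α) P₁-integrable. Then the optimal transport cost from the pushforward distance distribution to δ₀ does not increase: inf over couplings γ₂ of (Φ_*P₂, δ₀) of ∫⁻ |ρ − σ|^p dγ₂(ρ,σ) is less than or equal to the corresponding infimum over couplings γ₁ of (Φ_*P₁, δ₀). -/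

import Mathlib

open MeasureTheory Real NNReal

/-!
A coupling of a law `Q` on `[0,∞)` with `δ₀` is concentrated on `{σ = 0}`, so its cost is the
`p`-th moment of `Q`, whichever coupling is chosen (`lintegral_cost_of_coupling_dirac`). The claim
is therefore `∫ Φ^p dP₂ ≤ ∫ Φ^p dP₁`, that is, `∫ Φ^p w dP₁ ≤ ∫ Φ^p dP₁ · ∫ w dP₁` for the weight
`w = exp (R / α)`. Since `Φ^p` is non-decreasing and `w` non-increasing in the distance, this is
Chebyshev's association inequality (`integral_mul_le_of_antivary`).
-/

/-- Chebyshev's association inequality: oppositely ordered functions are negatively correlated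
under a probability measure. -/
lemma integral_mul_le_of_antivary {T : Type*} [MeasurableSpace T] (μ : Measure T)
    [IsProbabilityMeasure μ] (f w : T → ℝ) (hf : Integrable f μ) (hw : Integrable w μ)
    (hfw : Integrable (fun x => f x * w x) μ)
    (h : ∀ x y, (f x - f y) * (w x - w y) ≤ 0) :
    ∫ x, f x * w x ∂μ ≤ (∫ x, f x ∂μ) * ∫ x, w x ∂μ := by
  have hlin : ∀ b c d : ℝ, ∫ x, (f x * w x - b * f x - c * w x + d) ∂μ
      = (∫ x, f x * w x ∂μ) - b * (∫ x, f x ∂μ) - c * (∫ x, w x ∂μ) + d := by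
    intro b c d
    have i1 : Integrable (fun x => f x * w x - b * f x) μ := hfw.sub (hf.const_mul b)
    have i2 : Integrable (fun x => f x * w x - b * f x - c * w x) μ := i1.sub (hw.const_mul c)
    rw [integral_add i2 (integrable_const d), integral_sub i1 (hw.const_mul c),
      integral_sub hfw (hf.const_mul b), integral_const_mul, integral_const_mul]
    simp
  -- Integrate the pointwise inequality in `x`, then in `y`.
  have h1 : ∀ y, (∫ x, f x * w x ∂μ) - w y * (∫ x, f x ∂μ) - f y * (∫ x, w x ∂μ)
      + f y * w y ≤ 0 := by
    intro y
    rw [← hlin]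
    refine integral_nonpos fun x => ?_
    have := h x y
    simp only [Pi.zero_apply]
    linarith
  have h2 : ∫ y, (f y * w y - (∫ x, w x ∂μ) * f y - (∫ x, f x ∂μ) * w y
      + ∫ x, f x * w x ∂μ) ∂μ ≤ 0 := by
    refine integral_nonpos fun y => ?_
    have := h1 y
    simp only [Pi.zero_apply]
    linarith
  rw [hlin] at h2
  linarith

/-- Every coupling of `Q` with `δ₀` has transport cost equal to the `p`-th moment of `Q`. -/
lemma lintegral_cost_of_coupling_dirac (γ : Measure (ℝ≥0 × ℝ≥0)) (Q : Measure ℝ≥0) (p : ℝ)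
    (h1 : γ.map Prod.fst = Q) (h2 : γ.map Prod.snd = Measure.dirac (0 : ℝ≥0)) :
    ∫⁻ z, ENNReal.ofReal (|(z.1 : ℝ) - (z.2 : ℝ)| ^ p) ∂γ
      = ∫⁻ r, ENNReal.ofReal ((r : ℝ) ^ p) ∂Q := by
  have h0 : ∀ᵐ z ∂γ, z.2 = 0 := by
    have : ∀ᵐ s ∂(γ.map Prod.snd), s = 0 := by
      rw [h2, ae_dirac_eq]; exact rfl
    exact ae_of_ae_map measurable_snd.aemeasurable this
  rw [← h1, lintegral_map (by fun_prop) measurable_fst]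
  refine lintegral_congr_ae ?_
  filter_upwards [h0] with z hz
  simp [hz]

/-- **Theorem 1 (transport-cost form).** Let `Φ τ = d(τ, Ttil)` be the distance to the
optimal trajectory set, viewed as a map into `[0,∞) = ℝ≥0`. If the return `R` is
non-increasing in this distance, then the Gibbs update `P₂` of `P₁` does not increase the
optimal transport cost (with cost `|ρ − σ|^p`) from the pushforward distance distribution to
the Dirac measure at `0` on `[0,∞)`. -/
theorem gibbs_update_transport_cost_to_dirac_nonincreasing
    {T : Type*} [MetricSpace T] [MeasurableSpace T] [BorelSpace T]
    (Ttil : Set T) (hTtil : Ttil.Nonempty)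
    (P₁ : Measure T) [IsProbabilityMeasure P₁]
    (α : ℝ) (hα : 0 < α)
    (R : T → ℝ) (hRmeas : Measurable R)
    (hRmono : ∀ τ₁ τ₂ : T,
      Metric.infDist τ₁ Ttil ≤ Metric.infDist τ₂ Ttil → R τ₂ ≤ R τ₁)
    (hint : Integrable (fun τ => Real.exp (R τ / α)) P₁)
    (Z : ℝ) (hZ : Z = ∫ τ, Real.exp (R τ / α) ∂P₁) (hZpos : 0 < Z)
    (P₂ : Measure T)
    (hP₂ : P₂ = P₁.withDensity
      (fun τ => ENNReal.ofReal ((1 / Z) * Real.exp (R τ / α))))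
    (Φ : T → ℝ≥0)
    (hΦ : ∀ τ, (Φ τ : ℝ) = Metric.infDist τ Ttil)
    (p : ℝ) (hp : 1 ≤ p)
    (hΦp : Integrable (fun τ => Metric.infDist τ Ttil ^ p) P₁)
    (hΦpR : Integrable
      (fun τ => Metric.infDist τ Ttil ^ p * Real.exp (R τ / α)) P₁) :
    sInf ((fun γ : Measure (ℝ≥0 × ℝ≥0) =>
        ∫⁻ z, ENNReal.ofReal (|(z.1 : ℝ) - (z.2 : ℝ)| ^ p) ∂γ) ''
      {γ : Measure (ℝ≥0 × ℝ≥0) |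
        γ.map Prod.fst = P₂.map Φ ∧ γ.map Prod.snd = Measure.dirac (0 : ℝ≥0)})
      ≤ sInf ((fun γ : Measure (ℝ≥0 × ℝ≥0) =>
        ∫⁻ z, ENNReal.ofReal (|(z.1 : ℝ) - (z.2 : ℝ)| ^ p) ∂γ) ''
      {γ : Measure (ℝ≥0 × ℝ≥0) |
        γ.map Prod.fst = P₁.map Φ ∧ γ.map Prod.snd = Measure.dirac (0 : ℝ≥0)}) := by
  have hΦm : Measurable Φ := by
    have : Φ = fun τ => (Metric.infDist τ Ttil).toNNReal := by
      funext τ; rw [← hΦ, Real.toNNReal_coe]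
    rw [this]
    exact (Metric.continuous_infDist_pt Ttil).measurable.real_toNNReal
  have hpow : Measurable fun r : ℝ≥0 => ENNReal.ofReal ((r : ℝ) ^ p) := by fun_prop
  have hpowΦ : Measurable fun τ => ENNReal.ofReal ((Φ τ : ℝ) ^ p) := hpow.comp hΦm
  have hdens : Measurable fun τ => ENNReal.ofReal ((1 / Z) * Real.exp (R τ / α)) := by
    fun_prop
  have hd : ∀ τ, 0 ≤ Metric.infDist τ Ttil := fun τ => Metric.infDist_nonneg
  have hcheb := integral_mul_le_of_antivary P₁ _ _ hΦp hint hΦpR (by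
    intro x y
    rcases le_total (Metric.infDist x Ttil) (Metric.infDist y Ttil) with h | h
    · refine mul_nonpos_of_nonpos_of_nonneg
        (sub_nonpos.2 (Real.rpow_le_rpow (hd x) h (by linarith))) (sub_nonneg.2 ?_)
      exact Real.exp_le_exp.2 (div_le_div_of_nonneg_right (hRmono x y h) hα.le)
    · refine mul_nonpos_of_nonneg_of_nonpos
        (sub_nonneg.2 (Real.rpow_le_rpow (hd y) h (by linarith))) (sub_nonpos.2 ?_)
      exact Real.exp_le_exp.2 (div_le_div_of_nonneg_right (hRmono y x h) hα.le))
  rw [← hZ] at hcheb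
  have hmoment : ∫⁻ r, ENNReal.ofReal ((r : ℝ) ^ p) ∂(P₂.map Φ)
      ≤ ∫⁻ r, ENNReal.ofReal ((r : ℝ) ^ p) ∂(P₁.map Φ) := by
    rw [lintegral_map hpow hΦm, lintegral_map hpow hΦm, hP₂,
      lintegral_withDensity_eq_lintegral_mul _ hdens hpowΦ]
    have e : ∀ τ, ((fun τ => ENNReal.ofReal ((1 / Z) * Real.exp (R τ / α))) *
        fun τ => ENNReal.ofReal ((Φ τ : ℝ) ^ p)) τ
        = ENNReal.ofReal ((1 / Z) * (Metric.infDist τ Ttil ^ p * Real.exp (R τ / α))) := by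
      intro τ
      rw [Pi.mul_apply, ← ENNReal.ofReal_mul (by positivity), hΦ]
      congr 1; ring
    rw [lintegral_congr e]
    simp_rw [hΦ]
    rw [← ofReal_integral_eq_lintegral_ofReal (hΦpR.const_mul _)
        (.of_forall fun τ => mul_nonneg (by positivity)
          (mul_nonneg (Real.rpow_nonneg (hd τ) p) (Real.exp_pos _).le)),
      ← ofReal_integral_eq_lintegral_ofReal hΦp
        (.of_forall fun τ => Real.rpow_nonneg (hd τ) p), integral_const_mul]
    refine ENNReal.ofReal_le_ofReal ?_
    rw [one_div, inv_mul_le_iff₀ hZpos]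
    linarith
  refine le_sInf ?_
  rintro _ ⟨γ, ⟨hγ1, hγ2⟩, rfl⟩
  -- The coupling `(Φ, 0)_* P₂` requires `P₂` to have mass one for its second marginal to be `δ₀`.
  have hmass : P₂ Set.univ = 1 := by
    rw [hP₂, withDensity_apply _ MeasurableSet.univ, Measure.restrict_univ,
      ← ofReal_integral_eq_lintegral_ofReal (hint.const_mul _)
        (.of_forall fun τ => by positivity), integral_const_mul, ← hZ,
      one_div, inv_mul_cancel₀ hZpos.ne', ENNReal.ofReal_one]
  have hc1 : (P₂.map fun τ => (Φ τ, (0 : ℝ≥0))).map Prod.fst = P₂.map Φ := by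
    rw [Measure.map_map measurable_fst (by fun_prop)]; rfl
  have hc2 : (P₂.map fun τ => (Φ τ, (0 : ℝ≥0))).map Prod.snd = Measure.dirac 0 := by
    rw [Measure.map_map measurable_snd (by fun_prop)]
    change P₂.map (fun _ => (0 : ℝ≥0)) = _
    rw [Measure.map_const, hmass, one_smul]
  refine (sInf_le (Set.mem_image_of_mem _ (Set.mem_ofPred.2 ⟨hc1, hc2⟩))).trans ?_
  simp only
  rw [lintegral_cost_of_coupling_dirac _ _ p hc1 hc2,
    lintegral_cost_of_coupling_dirac _ _ p hγ1 hγ2]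
  exact hmoment
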